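/- Let D ⊆ Ĉ be a domain whose boundary ∂D is locally connected. Let z ∈ ℂ and 0 < r₁ < r₂. Then any set of connected components of D ∩ B(z,r₁) whose points are pairwise disconnected in D ∩ B(z,r₂) (i.e. which lie in pairwise distinct connected components of D ∩ B(z,r₂)) is finite. -/

import Mathlib

open Set Filter Metric Topology

/-!
Suppose that `p j` (`j ∈ ι`) and `b` are points of `D ∩ A` in pairwise distinct components of
`D ∩ O`, where `A` is convex and `closure A ⊆ O`. Since `D` is connected, `(u - p j) / (u - b)` has
a continuous logarithm `g j` off `D`; since `A` is convex, it also has one, `h j`, off `A`. On each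
component of `∂D \ closure A` the difference `g j - h j` is a constant `2πi * a j`, and by local
connectedness finitely many of these components cover the compact set `∂D ∩ ∂O`, so the vectors
`a j` lie in a finitely generated free abelian group. They are linearly independent: if
`∑ j, m j • a j = 0`, the logarithms of `∏ j, ((u - p j) / (u - b)) ^ m j` agree on `∂D ∩ ∂O` and
glue to a logarithm on `∂D ∪ ∂O`, which contains the boundary of the component of `p i` in `D ∩ O`.
That component contains neither `b` nor the other `p j`, so the winding number `m i` vanishes.
-/

section ConnectedComponents

variable {X Y : Type*} [TopologicalSpace X] [TopologicalSpace Y]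

theorem closure_connectedComponentIn_inter_subset (U : Set X) (x : X) :
    closure (connectedComponentIn U x) ∩ U ⊆ connectedComponentIn U x := by
  by_cases hx : x ∈ U
  · have hxC := mem_connectedComponentIn hx
    refine IsPreconnected.subset_connectedComponentIn ?_ ⟨subset_closure hxC, hx⟩ inter_subset_right
    exact isPreconnected_connectedComponentIn.subset_closure
      (subset_inter subset_closure (connectedComponentIn_subset U x)) inter_subset_left
  · simp [connectedComponentIn_eq_empty hx]

theorem frontier_connectedComponentIn_subset [LocallyConnectedSpace X] {U : Set X} (hU : IsOpen U)
    (x : X) : frontier (connectedComponentIn U x) ⊆ frontier U := by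
  rw [hU.frontier_eq, hU.connectedComponentIn.frontier_eq]
  exact fun y hy => ⟨closure_mono (connectedComponentIn_subset U x) hy.1,
    fun hyU => hy.2 (closure_connectedComponentIn_inter_subset U x ⟨hy.1, hyU⟩)⟩

theorem connectedComponentIn_inter_mem_nhdsWithin {F O : Set X} [LocallyConnectedSpace F]
    (hO : IsOpen O) {x : X} (hx : x ∈ F ∩ O) : connectedComponentIn (F ∩ O) x ∈ 𝓝[F] x := by
  have hC : connectedComponentIn (Subtype.val ⁻¹' O) ⟨x, hx.1⟩ ∈ 𝓝 (⟨x, hx.1⟩ : F) :=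
    connectedComponentIn_mem_nhds ((hO.preimage continuous_subtype_val).mem_nhds hx.2)
  refine preimage_coe_mem_nhds_subtype.1 (mem_of_superset hC fun y hy => ?_)
  exact connectedComponentIn_mono _ (Subtype.image_preimage_coe F O).subset
    (continuous_subtype_val.continuousOn.mapsTo_connectedComponentIn (by exact hx.2) hy)

theorem finite_image_connectedComponentIn_of_isCompact {F O K : Set X} [LocallyConnectedSpace F]
    (hO : IsOpen O) (hK : IsCompact K) (hKFO : K ⊆ F ∩ O) :
    (connectedComponentIn (F ∩ O) '' K).Finite := by
  obtain ⟨t, -, ht⟩ := hK.elim_nhdsWithin_subcover (connectedComponentIn (F ∩ O)) fun x hx =>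
    nhdsWithin_mono x (hKFO.trans inter_subset_left)
      (connectedComponentIn_inter_mem_nhdsWithin hO (hKFO hx))
  refine (t.finite_toSet.image (connectedComponentIn (F ∩ O))).subset ?_
  rintro _ ⟨y, hy, rfl⟩
  obtain ⟨x, hxt, hyx⟩ := mem_iUnion₂.1 (ht hy)
  exact ⟨x, hxt, connectedComponentIn_eq hyx⟩

theorem finite_image_connectedComponentIn_comp {s K : Set X} {t : Set Y} {f : X → Y}
    (hf : ContinuousOn f s) (hst : MapsTo f s t) (hKs : K ⊆ s)
    (hK : (connectedComponentIn s '' K).Finite) :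
    ((fun x => connectedComponentIn t (f x)) '' K).Finite := by
  refine (hK.image fun C => ⋃ y ∈ C, connectedComponentIn t (f y)).subset ?_
  rintro _ ⟨x, hx, rfl⟩
  refine ⟨_, mem_image_of_mem _ hx, ?_⟩
  have hxC := mem_connectedComponentIn (hKs hx)
  have h_eq : ∀ y ∈ connectedComponentIn s x,
      connectedComponentIn t (f y) = connectedComponentIn t (f x) := fun y hy =>
    (connectedComponentIn_eq <| connectedComponentIn_mono _ hst.image_subset <|
      hf.mapsTo_connectedComponentIn (hKs hx) hy).symm
  exact (iUnion₂_congr h_eq).trans (biUnion_const ⟨x, hxC⟩ _)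

theorem locallyConnectedSpace_frontier_preimage {f : X → Y}
    (hf : IsOpenEmbedding f) {s : Set Y} [LocallyConnectedSpace (frontier s)] :
    LocallyConnectedSpace (frontier (f ⁻¹' s)) := by
  rw [← hf.isOpenMap.preimage_frontier_eq_frontier_preimage hf.continuous]
  exact (hf.restrictPreimage (frontier s)).locallyConnectedSpace

end ConnectedComponents

section ContinuousLogarithms

theorem exp_sum_int_mul_eqOn_prod_zpow {ι X : Type*} {s : Set X} {f l : ι → X → ℂ}
    (hl : ∀ j, EqOn (Complex.exp ∘ l j) (f j) s) (J : Finset ι) (m : ι → ℤ) :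
    EqOn (Complex.exp ∘ fun x => ∑ j ∈ J, m j * l j x) (fun x => ∏ j ∈ J, f j x ^ m j) s := by
  intro x hx
  simp only [Function.comp_apply, Complex.exp_sum, Complex.exp_int_mul]
  exact Finset.prod_congr rfl fun j _ => congrArg (· ^ m j) (hl j hx)

variable {X : Type*} [TopologicalSpace X] {f f' g h : X → ℂ} {s t : Set X}

/-- `f` has a continuous logarithm on `s`; in particular it has no zeros there. -/
def HasLogOn (f : X → ℂ) (s : Set X) : Prop :=
  ∃ g : X → ℂ, ContinuousOn g s ∧ EqOn (Complex.exp ∘ g) f s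

namespace HasLogOn

theorem mono (hf : HasLogOn f t) (hst : s ⊆ t) : HasLogOn f s :=
  let ⟨g, hg, hgf⟩ := hf
  ⟨g, hg.mono hst, hgf.mono hst⟩

theorem congr (hf : HasLogOn f s) (hff' : EqOn f f' s) : HasLogOn f' s :=
  let ⟨g, hg, hgf⟩ := hf
  ⟨g, hg, hgf.trans hff'⟩

theorem inv (hf : HasLogOn f s) : HasLogOn (fun x => (f x)⁻¹) s :=
  let ⟨g, hg, hgf⟩ := hf
  ⟨fun x => -g x, hg.neg, fun x hx => by simp [Complex.exp_neg, ← hgf hx]⟩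

theorem mul (hf : HasLogOn f s) (hf' : HasLogOn f' s) : HasLogOn (fun x => f x * f' x) s :=
  let ⟨g, hg, hgf⟩ := hf
  let ⟨g', hg', hgf'⟩ := hf'
  ⟨fun x => g x + g' x, hg.add hg', fun x hx => by simp [Complex.exp_add, ← hgf hx, ← hgf' hx]⟩

theorem of_mem_slitPlane (hf : ContinuousOn f s) (hfs : MapsTo f s Complex.slitPlane) :
    HasLogOn f s :=
  ⟨fun x => Complex.log (f x), hf.clog hfs, fun _ hx =>
    Complex.exp_log (Complex.slitPlane_ne_zero (hfs hx))⟩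

theorem union (hs : IsClosed s) (ht : IsClosed t) (hg : ContinuousOn g s) (hh : ContinuousOn h t)
    (hgf : EqOn (Complex.exp ∘ g) f s) (hhf : EqOn (Complex.exp ∘ h) f t)
    (hgh : EqOn g h (s ∩ t)) : HasLogOn f (s ∪ t) := by
  classical
  have hs_eq : EqOn (s.piecewise g h) g s := piecewise_eqOn s g h
  have ht_eq : EqOn (s.piecewise g h) h t := fun x hx => by
    by_cases hxs : x ∈ s
    · exact (hs_eq hxs).trans (hgh ⟨hxs, hx⟩)
    · exact piecewise_eq_of_notMem s g h hxs
  refine ⟨s.piecewise g h, (hg.congr hs_eq).union_of_isClosed (hh.congr ht_eq) hs ht, ?_⟩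
  exact (hs_eq.comp_left.trans hgf).union (ht_eq.comp_left.trans hhf)

end HasLogOn

theorem exists_int_forall_eq_add_of_exp_eqOn (hs : IsPreconnected s) (hg : ContinuousOn g s)
    (hh : ContinuousOn h s) (hgh : EqOn (Complex.exp ∘ g) (Complex.exp ∘ h) s) :
    ∃ n : ℤ, ∀ x ∈ s, g x = h x + n * (2 * Real.pi * Complex.I) := by
  rcases s.eq_empty_or_nonempty with rfl | ⟨x, hx⟩
  · simp
  obtain ⟨n, hn⟩ := Complex.exp_eq_exp_iff_exists_int.1 (hgh hx)
  refine ⟨n, Complex.isCoveringMap_exp.eqOn_of_comp_eqOn hs hg (hh.add continuousOn_const) ?_ hx hn⟩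
  intro y hy
  exact Subtype.ext ((hgh hy).trans (Complex.exp_eq_exp_iff_exists_int.2 ⟨-n, by simp⟩))

theorem exists_finite_forall_eq_add_int_of_exp_eqOn {ι : Type*} {F O K : Set X}
    [LocallyConnectedSpace F] (hO : IsOpen O) (hK : IsCompact K) (hKFO : K ⊆ F ∩ O)
    {g h : ι → X → ℂ} (hg : ∀ j, ContinuousOn (g j) (F ∩ O)) (hh : ∀ j, ContinuousOn (h j) (F ∩ O))
    (hgh : ∀ j, EqOn (Complex.exp ∘ g j) (Complex.exp ∘ h j) (F ∩ O)) :
    ∃ (T : Set (Set X)) (a : ι → T → ℤ), T.Finite ∧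
      ∀ x ∈ K, ∃ C, ∀ j, g j x = h j x + a j C * (2 * Real.pi * Complex.I) := by
  have h_period (j : ι) (C : ↥(connectedComponentIn (F ∩ O) '' K)) :
      ∃ n : ℤ, ∀ x ∈ C.1, g j x = h j x + n * (2 * Real.pi * Complex.I) := by
    obtain ⟨_, x, -, rfl⟩ := C
    have hC := connectedComponentIn_subset (F ∩ O) x
    exact exists_int_forall_eq_add_of_exp_eqOn isPreconnected_connectedComponentIn
      ((hg j).mono hC) ((hh j).mono hC) ((hgh j).mono hC)
  choose a ha using h_period
  exact ⟨_, a, finite_image_connectedComponentIn_of_isCompact hO hK hKFO, fun x hx =>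
    ⟨⟨_, mem_image_of_mem _ hx⟩, fun j => ha j _ x (mem_connectedComponentIn (hKFO hx))⟩⟩

theorem hasLogOn_of_convex {E : Type*} [NormedAddCommGroup E] [NormedSpace ℝ E] {S : Set E}
    (hS : Convex ℝ S) (hSo : IsOpen S) {f : E → ℂ} (hf : ContinuousOn f S)
    (hf₀ : ∀ u ∈ S, f u ≠ 0) : HasLogOn f S := by
  rcases S.eq_empty_or_nonempty with rfl | hne
  · exact ⟨0, continuousOn_empty _, eqOn_empty _ _⟩
  · have := hS.contractibleSpace hne
    exact Complex.exists_continuousOn_eqOn_exp_comp (SimplyConnectedSpace.ofContractible S) hSo hf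
      fun ⟨u, hu, hfu⟩ => hf₀ u hu hfu

end ContinuousLogarithms

section WindingNumber

theorem not_hasLogOn_zpow_sphere (p : ℂ) {r : ℝ} (hr : 0 < r) {m : ℤ} (hm : m ≠ 0) :
    ¬ HasLogOn (fun u => (u - p) ^ m) (sphere p r) := by
  rintro ⟨g, hg, hgexp⟩
  have h_circle : ∀ θ, circleMap p r θ ∈ sphere p r := circleMap_mem_sphere p hr.le
  obtain ⟨n, hn⟩ := exists_int_forall_eq_add_of_exp_eqOn (s := univ) (g := g ∘ circleMap p r)
    (h := fun θ => m * (Real.log r + θ * Complex.I)) isPreconnected_univ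
    (hg.comp (continuous_circleMap p r).continuousOn fun θ _ => h_circle θ)
    (by fun_prop) fun θ _ => by
      have h_exp := hgexp (h_circle θ)
      rw [Function.comp_apply] at h_exp ⊢
      rw [Function.comp_apply, Function.comp_apply, h_exp, Complex.exp_int_mul, Complex.exp_add,
        ← Complex.ofReal_exp, Real.exp_log hr, ← circleMap_zero, ← circleMap_sub_center p]
  have h_period : g (circleMap p r (2 * Real.pi)) = g (circleMap p r 0) :=
    congrArg g (by simpa using periodic_circleMap p r 0)
  have h_turn : (m : ℂ) * (2 * Real.pi * Complex.I) = 0 := by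
    have h₀ := hn 0 trivial
    have h₁ := hn (2 * Real.pi) trivial
    simp only [Function.comp_apply, Complex.ofReal_zero] at h₀ h₁
    push_cast at h₁
    linear_combination h_period - h₁ + h₀
  simp [hm] at h_turn

theorem not_hasLogOn_zpow_mul_frontier {V : Set ℂ} (hV : IsOpen V) (hVb : Bornology.IsBounded V)
    {p : ℂ} (hp : p ∈ V) {m : ℤ} (hm : m ≠ 0) {f : ℂ → ℂ} (hf : ContinuousOn f (closure V))
    (hf₀ : ∀ u ∈ closure V, f u ≠ 0) :
    ¬ HasLogOn (fun u => (u - p) ^ m * f u) (frontier V) := by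
  classical
  rintro ⟨g, hg, hgexp⟩
  obtain ⟨G, hG⟩ := ContinuousMap.exists_restrict_eq isClosed_frontier
    (⟨(frontier V).domRestrict g, hg.domRestrict⟩ : C(frontier V, ℂ))
  have hGg : ∀ u ∈ frontier V, G u = g u := fun u hu => congrArg (· ⟨u, hu⟩) hG
  have hsub : ∀ u ∈ Vᶜ, u - p ≠ 0 := fun u hu h => hu (sub_eq_zero.1 h ▸ hp)
  -- A Tietze extension of the logarithm extends `(u - p) ^ m` from `Vᶜ` to `ℂ` without zeros.
  let ψ : ℂ → ℂ := V.piecewise (fun u => Complex.exp (G u) / f u) fun u => (u - p) ^ m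
  have hψ : Continuous ψ := by
    refine continuous_piecewise (fun u hu => ?_) ?_ ?_
    · rw [hGg u hu, div_eq_iff (hf₀ u (frontier_subset_closure hu))]
      exact hgexp hu
    · exact ContinuousOn.div (by fun_prop) hf hf₀
    · rw [hV.isClosed_compl.closure_eq]
      exact ContinuousOn.zpow₀ (by fun_prop) _ fun u hu => Or.inl (hsub u hu)
  have hψ₀ : ∀ u, ψ u ≠ 0 := by
    intro u
    by_cases hu : u ∈ V
    · simpa [ψ, hu] using hf₀ u (subset_closure hu)
    · simpa [ψ, hu] using zpow_ne_zero m (hsub u hu)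
  obtain ⟨r, hr, hVr⟩ := hVb.subset_ball_lt 0 p
  refine not_hasLogOn_zpow_sphere p hr hm
    ((hasLogOn_of_convex convex_univ isOpen_univ hψ.continuousOn fun u _ => hψ₀ u).mono
      (subset_univ _) |>.congr fun u hu => ?_)
  have huV : u ∉ V := fun h => (mem_ball.1 (hVr h)).ne hu
  exact piecewise_eq_of_notMem _ _ _ huV

theorem eq_zero_of_hasLogOn_prod_frontier {ι : Type*} {V : Set ℂ} (hV : IsOpen V)
    (hVb : Bornology.IsBounded V) {s : Finset ι} {p : ι → ℂ} {b : ℂ} {m : ι → ℤ} {i : ι}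
    (hi : i ∈ s) (hpi : p i ∈ V) (hp : ∀ j ∈ s, j ≠ i → p j ∉ closure V) (hb : b ∉ closure V)
    (hlog : HasLogOn (fun u => ∏ j ∈ s, ((u - p j) / (u - b)) ^ m j) (frontier V)) : m i = 0 := by
  classical
  by_contra hmi
  have hsub : ∀ q ∉ closure V, ∀ u ∈ closure V, u - q ≠ 0 := fun q hq u hu h =>
    hq (sub_eq_zero.1 h ▸ hu)
  have hquot : ∀ j ∈ s.erase i, ∀ u ∈ closure V, (u - p j) / (u - b) ≠ 0 := fun j hj u hu =>
    div_ne_zero (hsub _ (hp j (Finset.mem_of_mem_erase hj) (Finset.ne_of_mem_erase hj)) u hu)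
      (hsub b hb u hu)
  let f : ℂ → ℂ := fun u => (u - b) ^ (-m i) * ∏ j ∈ s.erase i, ((u - p j) / (u - b)) ^ m j
  refine not_hasLogOn_zpow_mul_frontier hV hVb hpi hmi (f := f) ?_ (fun u hu => ?_)
    (hlog.congr fun u _ => ?_)
  · refine ContinuousOn.mul ?_ (continuousOn_finsetProd _ fun j hj => ?_)
    · exact ContinuousOn.zpow₀ (by fun_prop) _ fun u hu => Or.inl (hsub b hb u hu)
    · exact ContinuousOn.zpow₀ (ContinuousOn.div (by fun_prop) (by fun_prop) (hsub b hb)) _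
        fun u hu => Or.inl (hquot j hj u hu)
  · exact mul_ne_zero (zpow_ne_zero _ (hsub b hb u hu))
      (Finset.prod_ne_zero_iff.2 fun j hj => zpow_ne_zero _ (hquot j hj u hu))
  · simp only [f]
    rw [← Finset.mul_prod_erase s _ hi, div_zpow, zpow_neg, div_eq_mul_inv, mul_assoc]

end WindingNumber

section Quotients

open scoped ComplexOrder in
theorem div_mem_slitPlane_of_convex {A : Set ℂ} (hA : Convex ℝ A) {p q u : ℂ} (hp : p ∈ A)
    (hq : q ∈ A) (hu : u ∉ A) : (u - p) / (u - q) ∈ Complex.slitPlane := by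
  rw [Complex.mem_slitPlane_iff_not_le_zero]
  intro h_nonpos
  obtain ⟨t, ht, h_eq⟩ := RCLike.nonneg_iff_exists_ofReal.1 (neg_nonneg.2 h_nonpos)
  have huq : u - q ≠ 0 := fun h => hu (sub_eq_zero.1 h ▸ hq)
  have h_smul : u - p = t • (q - u) := by
    rw [Complex.real_smul]
    field_simp at h_eq
    linear_combination h_eq
  refine hu (hA.segment_subset hp hq (mem_segment_iff_sameRay.2 ?_))
  rw [h_smul]
  exact SameRay.sameRay_nonneg_smul_left _ ht

theorem hasLogOn_div_compl_of_convex {A : Set ℂ} (hA : Convex ℝ A) {p q : ℂ} (hp : p ∈ A)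
    (hq : q ∈ A) : HasLogOn (fun u => (u - p) / (u - q)) Aᶜ := by
  refine .of_mem_slitPlane (ContinuousOn.div (by fun_prop) (by fun_prop) fun u hu h => ?_)
    fun u hu => div_mem_slitPlane_of_convex hA hp hq hu
  exact hu (sub_eq_zero.1 h ▸ hq)

/-- The polynomial in `u` of degree at most one vanishing exactly at the point `x` of the Riemann
sphere: `u - x` if `x` is finite, and the constant `1` if `x = ∞`. -/
def linearFactor (x : OnePoint ℂ) (u : ℂ) : ℂ := x.elim 1 fun p => u - p

theorem linearFactor_ne_zero {x : OnePoint ℂ} {u : ℂ} (hux : (u : OnePoint ℂ) ≠ x) :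
    linearFactor x u ≠ 0 := by
  induction x using OnePoint.rec with
  | infty => exact one_ne_zero
  | coe p => exact sub_ne_zero.2 fun h => hux (congrArg _ h)

theorem hasLogOn_linearFactor_of_convex {S : Set ℂ} (hS : Convex ℝ S) (hSo : IsOpen S)
    {x : OnePoint ℂ} (hx : x ∉ OnePoint.some '' S) : HasLogOn (linearFactor x) S := by
  refine hasLogOn_of_convex hS hSo ?_
    fun u hu => linearFactor_ne_zero fun h => hx ⟨u, hu, h⟩
  induction x using OnePoint.rec with
  | infty => exact continuousOn_const
  | coe p => exact continuousOn_id.sub continuousOn_const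

theorem eventually_hasLogOn_linearFactor_div {D : Set (OnePoint ℂ)} (hD : IsOpen D)
    {x : OnePoint ℂ} (hx : x ∈ D) :
    ∀ᶠ y in 𝓝 x,
      HasLogOn (fun u => linearFactor x u / linearFactor y u) (OnePoint.some ⁻¹' D)ᶜ := by
  induction x using OnePoint.rec with
  | infty =>
    obtain ⟨R, -, hR⟩ :=
      ((OnePoint.isOpen_iff_of_mem hx).1 hD).2.isBounded.subset_ball_lt 0 (0 : ℂ)
    have hK : IsOpen ((OnePoint.some '' closedBall (0 : ℂ) R)ᶜ) :=
      OnePoint.isOpen_compl_image_coe.2 ⟨isClosed_closedBall, isCompact_closedBall 0 R⟩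
    filter_upwards [hK.mem_nhds (by simp)] with y hy
    have hy_ball : y ∉ OnePoint.some '' ball (0 : ℂ) R := fun h =>
      hy (image_mono ball_subset_closedBall h)
    have h_log := hasLogOn_linearFactor_of_convex (convex_ball 0 R) isOpen_ball hy_ball
    simpa [linearFactor] using h_log.inv.mono hR
  | coe p =>
    rw [OnePoint.nhds_coe_eq, eventually_map]
    obtain ⟨ε, hε, hεD⟩ := Metric.isOpen_iff.1 (hD.preimage OnePoint.continuous_coe) p hx
    filter_upwards [ball_mem_nhds p hε] with q hq
    exact (hasLogOn_div_compl_of_convex (convex_ball p ε) (mem_ball_self hε) hq).mono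
      (compl_subset_compl.2 hεD)

theorem hasLogOn_linearFactor_div {D : Set (OnePoint ℂ)} (hD : IsOpen D) (hDc : IsPreconnected D)
    {x y : OnePoint ℂ} (hx : x ∈ D) (hy : y ∈ D) :
    HasLogOn (fun u => linearFactor x u / linearFactor y u) (OnePoint.some ⁻¹' D)ᶜ := by
  refine hDc.induction₂
    (fun x y => HasLogOn (fun u => linearFactor x u / linearFactor y u) (OnePoint.some ⁻¹' D)ᶜ)
    (fun x hx => nhdsWithin_le_nhds (eventually_hasLogOn_linearFactor_div hD hx))
    (fun x y w _ hy _ hxy hyw => (hxy.mul hyw).congr fun u hu => ?_)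
    (fun x y _ _ hxy => hxy.inv.congr fun u _ => inv_div _ _) hx hy
  have huy : (u : OnePoint ℂ) ≠ y := fun h => hu (by rwa [mem_preimage, h])
  exact div_mul_div_cancel₀ (linearFactor_ne_zero huy)

end Quotients

section Components

theorem linearIndependent_of_log_eq_log_add {ι κ : Type*} {E O : Set ℂ} (hE : IsOpen E)
    (hO : IsOpen O) (hOb : Bornology.IsBounded O) {p : ι → ℂ} {b : ℂ} (hp : ∀ j, p j ∈ E ∩ O)
    (hb : b ∈ E ∩ O) (hpp : Function.Injective fun j => connectedComponentIn (E ∩ O) (p j))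
    (hpb : ∀ j, connectedComponentIn (E ∩ O) (p j) ≠ connectedComponentIn (E ∩ O) b)
    {g h : ι → ℂ → ℂ} (hg : ∀ j, ContinuousOn (g j) (frontier E))
    (hh : ∀ j, ContinuousOn (h j) (frontier O))
    (hgexp : ∀ j, EqOn (Complex.exp ∘ g j) (fun u => (u - p j) / (u - b)) (frontier E))
    (hhexp : ∀ j, EqOn (Complex.exp ∘ h j) (fun u => (u - p j) / (u - b)) (frontier O))
    {a : ι → κ → ℤ} (ha : ∀ u ∈ frontier E ∩ frontier O, ∃ k, ∀ j,
      g j u = h j u + a j k * (2 * Real.pi * Complex.I)) :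
    LinearIndependent ℤ a := by
  refine linearIndependent_iff'.2 fun s m hm i hi => ?_
  have hU : IsOpen (E ∩ O) := hE.inter hO
  let V := connectedComponentIn (E ∩ O) (p i)
  have hVU : V ⊆ E ∩ O := connectedComponentIn_subset _ _
  have hcl : ∀ q ∈ E ∩ O, V ≠ connectedComponentIn (E ∩ O) q → q ∉ closure V := fun q hq hne hqV =>
    hne (connectedComponentIn_eq (closure_connectedComponentIn_inter_subset _ _ ⟨hqV, hq⟩))
  have hfr : frontier V ⊆ frontier E ∪ frontier O :=
    (frontier_connectedComponentIn_subset hU _).trans <| (frontier_inter_subset E O).trans <|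
      union_subset_union inter_subset_left inter_subset_right
  have hsum_eq : EqOn (fun u => ∑ j ∈ s, m j * g j u) (fun u => ∑ j ∈ s, m j * h j u)
      (frontier E ∩ frontier O) := by
    intro u hu
    obtain ⟨k, hk⟩ := ha u hu
    have hmk : ∑ j ∈ s, (m j * a j k : ℂ) = 0 := by
      have := congrFun hm k
      simp only [Finset.sum_apply, Pi.smul_apply, smul_eq_mul, Pi.zero_apply] at this
      exact_mod_cast this
    simp only [hk, mul_add, Finset.sum_add_distrib, ← mul_assoc, ← Finset.sum_mul, hmk, zero_mul,
      add_zero]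
  refine eq_zero_of_hasLogOn_prod_frontier hU.connectedComponentIn
    (hOb.subset (hVU.trans inter_subset_right)) hi (mem_connectedComponentIn (hp i))
    (fun j _ hji => hcl _ (hp j) fun h => hji (hpp h).symm) (hcl b hb (hpb i)) (.mono ?_ hfr)
  exact .union isClosed_frontier isClosed_frontier
    (continuousOn_finsetSum _ fun j _ => continuousOn_const.mul (hg j))
    (continuousOn_finsetSum _ fun j _ => continuousOn_const.mul (hh j))
    (exp_sum_int_mul_eqOn_prod_zpow hgexp s m) (exp_sum_int_mul_eqOn_prod_zpow hhexp s m)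
    hsum_eq

theorem finite_of_injective_connectedComponentIn_preimage_coe {ι : Type*}
    {D : Set (OnePoint ℂ)} (hD : IsOpen D) (hDc : IsPreconnected D)
    [LocallyConnectedSpace (frontier D)] {A O : Set ℂ} (hA : Convex ℝ A) (hO : IsOpen O)
    (hOb : Bornology.IsBounded O) (hAO : closure A ⊆ O) {p : ι → ℂ} {b : ℂ}
    (hp : ∀ j, p j ∈ OnePoint.some ⁻¹' D ∩ A) (hb : b ∈ OnePoint.some ⁻¹' D ∩ A)
    (hpp : Function.Injective fun j => connectedComponentIn (OnePoint.some ⁻¹' D ∩ O) (p j))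
    (hpb : ∀ j, connectedComponentIn (OnePoint.some ⁻¹' D ∩ O) (p j) ≠
      connectedComponentIn (OnePoint.some ⁻¹' D ∩ O) b) : Finite ι := by
  set E : Set ℂ := OnePoint.some ⁻¹' D
  have hE : IsOpen E := hD.preimage OnePoint.continuous_coe
  have hEA : E ∩ A ⊆ E ∩ O := inter_subset_inter_right E (subset_closure.trans hAO)
  have hfrE : frontier E ⊆ Eᶜ := fun u hu => (hE.frontier_eq ▸ hu).2
  have hfrO : frontier O ⊆ (closure A)ᶜ := fun u hu huA => (hO.frontier_eq ▸ hu).2 (hAO huA)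
  have hAc : (closure A)ᶜ ⊆ Aᶜ := compl_subset_compl.2 subset_closure
  choose g hg hgexp using fun j => hasLogOn_linearFactor_div hD hDc (hp j).1 hb.1
  choose h hh hhexp using fun j => hasLogOn_div_compl_of_convex hA (hp j).2 hb.2
  have hK : IsCompact (frontier E ∩ frontier O) :=
    (Metric.isCompact_of_isClosed_isBounded isClosed_frontier
      (hOb.closure.subset frontier_subset_closure)).inter_left isClosed_frontier
  have := locallyConnectedSpace_frontier_preimage OnePoint.isOpenEmbedding_coe (s := D)
  have hWE : frontier E ∩ (closure A)ᶜ ⊆ Eᶜ := inter_subset_left.trans hfrE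
  have hWA : frontier E ∩ (closure A)ᶜ ⊆ Aᶜ := inter_subset_right.trans hAc
  obtain ⟨T, a, hT, ha⟩ := exists_finite_forall_eq_add_int_of_exp_eqOn
    isClosed_closure.isOpen_compl hK (inter_subset_inter_right _ hfrO)
    (fun j => (hg j).mono hWE) (fun j => (hh j).mono hWA)
    fun j => ((hgexp j).mono hWE).trans ((hhexp j).mono hWA).symm
  have := hT.to_subtype
  have h_indep : LinearIndependent ℤ a :=
    linearIndependent_of_log_eq_log_add hE hO hOb (fun j => hEA (hp j)) (hEA hb) hpp hpb
      (fun j => (hg j).mono hfrE) (fun j => (hh j).mono (hfrO.trans hAc))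
      (fun j => (hgexp j).mono hfrE) (fun j => (hhexp j).mono (hfrO.trans hAc)) ha
  exact h_indep.finite_of_isNoetherian

theorem finite_image_connectedComponentIn_preimage_coe {D : Set (OnePoint ℂ)} (hD : IsOpen D)
    (hDc : IsPreconnected D) [LocallyConnectedSpace (frontier D)] {A O : Set ℂ} (hA : Convex ℝ A)
    (hO : IsOpen O) (hOb : Bornology.IsBounded O) (hAO : closure A ⊆ O) :
    (connectedComponentIn (OnePoint.some ⁻¹' D ∩ O) '' (OnePoint.some ⁻¹' D ∩ A)).Finite := by
  rcases (OnePoint.some ⁻¹' D ∩ A).eq_empty_or_nonempty with h_empty | ⟨b, hb⟩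
  · simp [h_empty]
  set comp := connectedComponentIn (OnePoint.some ⁻¹' D ∩ O)
  refine Finite.of_sdiff (t := {comp b}) ?_ (finite_singleton _)
  choose p hp hpC using fun C : ↥(comp '' (OnePoint.some ⁻¹' D ∩ A) \ {comp b}) => C.2.1
  exact finite_of_injective_connectedComponentIn_preimage_coe hD hDc hA hO hOb hAO hp hb
    (fun C C' h => Subtype.ext ((hpC C).symm.trans (h.trans (hpC C'))))
    (fun C h => C.2.2 ((hpC C).symm.trans h))

theorem stmt_1_general {D : Set (OnePoint ℂ)} (hD : IsOpen D) (hDc : IsPreconnected D)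
    [LocallyConnectedSpace (frontier D)] {A O : Set ℂ} (hA : Convex ℝ A) (hO : IsOpen O)
    (hOb : Bornology.IsBounded O) (hAO : closure A ⊆ O) :
    {C : Set (OnePoint ℂ) | ∃ w ∈ D ∩ ((fun u : ℂ => (u : OnePoint ℂ)) '' A),
      C = connectedComponentIn (D ∩ ((fun u : ℂ => (u : OnePoint ℂ)) '' O)) w}.Finite := by
  have hEA : OnePoint.some ⁻¹' D ∩ A ⊆ OnePoint.some ⁻¹' D ∩ O :=
    inter_subset_inter_right _ (subset_closure.trans hAO)
  have h_maps : MapsTo OnePoint.some (OnePoint.some ⁻¹' D ∩ O) (D ∩ OnePoint.some '' O) :=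
    fun u hu => ⟨hu.1, mem_image_of_mem _ hu.2⟩
  refine (finite_image_connectedComponentIn_comp OnePoint.continuous_coe.continuousOn h_maps hEA
    (finite_image_connectedComponentIn_preimage_coe hD hDc hA hO hOb hAO)).subset ?_
  rintro _ ⟨_, ⟨hwD, u, huA, rfl⟩, rfl⟩
  exact mem_image_of_mem _ ⟨hwD, huA⟩

end Components

/-- Let `D ⊆ Ĉ` be a domain with locally connected boundary, `z ∈ ℂ`, `0 < r₁ < r₂`.
Then only finitely many connected components of `D ∩ B(z,r₁)` are pairwise
disconnected in `D ∩ B(z,r₂)`; equivalently, the set of connected components of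
`D ∩ B(z,r₂)` that meet `D ∩ B(z,r₁)` is finite. -/
theorem stmt_1 (D : Set (OnePoint ℂ)) (hD : IsOpen D) (hDconn : IsConnected D)
    (hlc : LocallyConnectedSpace ↥(frontier D))
    (z : ℂ) (r₁ r₂ : ℝ) (h1 : 0 < r₁) (h12 : r₁ < r₂) :
    {C : Set (OnePoint ℂ) |
      ∃ w ∈ D ∩ ((fun u : ℂ => (u : OnePoint ℂ)) '' Metric.ball z r₁),
        C = connectedComponentIn
          (D ∩ ((fun u : ℂ => (u : OnePoint ℂ)) '' Metric.ball z r₂)) w}.Finite := by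
  exact stmt_1_general hD hDconn.isPreconnected (convex_ball z r₁) isOpen_ball isBounded_ball
    (closure_ball_subset_closedBall.trans (closedBall_subset_ball h12))
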